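/- Let G = (V, E) be a strongly connected digraph with start vertex s. Then for every root r (r = s or r marked), the auxiliary graph G_r is strongly connected. -/

import Mathlib

variable {V : Type*}

/-- `p` is a path from `u` to `w` in the digraph with edge set `E`:
a nonempty list of vertices starting at `u`, ending at `w`, with consecutive edges in `E`. -/
def IsPathFrom (E : Set (V × V)) (u w : V) (p : List V) : Prop :=
  p.head? = some u ∧ p.getLast? = some w ∧ p.Chain' (fun a b => (a, b) ∈ E)

/-- There is a path from `u` to `w` in the digraph with edge set `E`. -/
def Reaches (E : Set (V × V)) (u w : V) : Prop :=
  ∃ p, IsPathFrom E u w p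

/-- Every vertex has a path to every other vertex. -/
def StronglyConnected (E : Set (V × V)) : Prop :=
  ∀ u w : V, Reaches E u w

/-- `v` and `w` are 2-edge-connected: `v = w` or, for every edge `e`,
there are paths from `v` to `w` and from `w` to `v` avoiding `e`. -/
def TwoEdgeConn (E : Set (V × V)) (v w : V) : Prop :=
  v = w ∨ ∀ e ∈ E, Reaches (E \ {e}) v w ∧ Reaches (E \ {e}) w v

/-- `w` is 2-edge-connected from `v`: for every edge `e` there is a path
from `v` to `w` avoiding `e`. -/
def TwoEdgeConnFrom (E : Set (V × V)) (v w : V) : Prop :=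
  ∀ e ∈ E, Reaches (E \ {e}) v w

/-- `u` dominates `w` in the flow graph with start vertex `s`:
every path from `s` to `w` contains `u`. -/
def Dominates (E : Set (V × V)) (s u w : V) : Prop :=
  ∀ p, IsPathFrom E s w p → u ∈ p

/-- `(u, w)` is a bridge of the flow graph with start vertex `s`:
every path from `s` to `w` contains the edge `(u, w)`. -/
def IsBridge (E : Set (V × V)) (s u w : V) : Prop :=
  (u, w) ∈ E ∧ ∀ p, IsPathFrom E s w p → (u, w) ∈ p.zip p.tail

/-- `w` is marked in the flow graph with start vertex `s`: some bridge ends at `w`. -/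
def Marked (E : Set (V × V)) (s w : V) : Prop :=
  ∃ u, IsBridge E s u w

/-- The reverse digraph: every edge direction is reversed. -/
def reverseE (E : Set (V × V)) : Set (V × V) :=
  {e | (e.2, e.1) ∈ E}

/-- `u` and `w` are mutually reachable. -/
def MutualReach (E : Set (V × V)) (u w : V) : Prop :=
  Reaches E u w ∧ Reaches E w u

/-- The number of strongly connected components: the number of equivalence
classes of the mutual-reachability relation. -/
noncomputable def numSCC (E : Set (V × V)) : ℕ :=
  Nat.card (Quot (MutualReach E))

/-- `e` is a strong bridge: removing it increases the number of strongly
connected components. -/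
def IsStrongBridge (E : Set (V × V)) (e : V × V) : Prop :=
  e ∈ E ∧ numSCC E < numSCC (E \ {e})

/-- `d` is the immediate dominator of `w` in the flow graph with start vertex `s`:
`d` is a proper dominator of `w` dominated by every proper dominator of `w`. -/
def ImmDomIs (E : Set (V × V)) (s w d : V) : Prop :=
  Dominates E s d w ∧ d ≠ w ∧ ∀ x, Dominates E s x w → x ≠ w → Dominates E s x d

/-- `r` is the deepest marked dominator `r_v` of `v`: either `r` is a marked
dominator of `v` dominated by every marked dominator of `v`, or no marked vertex
dominates `v` and `r = s`. -/
def DeepestMarkedDomIs (E : Set (V × V)) (s v r : V) : Prop :=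
  (Marked E s r ∧ Dominates E s r v ∧
    ∀ x, Marked E s x → Dominates E s x v → Dominates E s x r)
  ∨ (r = s ∧ ∀ x, Marked E s x → ¬ Dominates E s x v)

/-- `T(r)`: the vertices whose deepest marked dominator is `r`. -/
def Tset (E : Set (V × V)) (s r : V) : Set V :=
  {v | DeepestMarkedDomIs E s v r}

/-- The roots of the decomposition of the dominator tree: `s` and the marked vertices. -/
def IsRoot (E : Set (V × V)) (s r : V) : Prop :=
  r = s ∨ Marked E s r

/-- `z` is a marked child (in the dominator tree) of a boundary vertex of `T(r)`. -/
def MarkedChildOfBoundary (E : Set (V × V)) (s r z : V) : Prop :=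
  Marked E s z ∧ ∃ x ∈ Tset E s r, ImmDomIs E s z x

/-- The vertex set `V_r` of the auxiliary graph `G_r` (with `dr` playing the role
of `d(r)` when `r ≠ s`): the ordinary vertices `T(r)`, the marked children of
boundary vertices of `T(r)`, and (if `r ≠ s`) the vertex `d(r)`. -/
def auxVerts (E : Set (V × V)) (s r dr : V) : Set V :=
  Tset E s r ∪ {z | MarkedChildOfBoundary E s r z} ∪ {x | r ≠ s ∧ x = dr}

/-- The edge set `E_r` of the auxiliary graph `G_r` (with `dr` playing the role of
`d(r)` when `r ≠ s`): edges of `G` between ordinary vertices; the edge `(v, w)` for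
each boundary vertex `v ∈ T(r)` and marked child `w` of `v`; the edge `(d(r), r)` if
`r ≠ s`; and the shortcut edges of types (a), (b), (c). -/
def auxEdges (E : Set (V × V)) (s r dr : V) : Set (V × V) :=
  {e | e ∈ E ∧ e.1 ∈ Tset E s r ∧ e.2 ∈ Tset E s r} ∪
  {e | e.1 ∈ Tset E s r ∧ Marked E s e.2 ∧ ImmDomIs E s e.2 e.1} ∪
  {e | r ≠ s ∧ e = (dr, r)} ∪
  {e | ∃ u v, (u, v) ∈ E ∧ u ∈ Tset E s r ∧ ¬ Dominates E s r v ∧ e = (u, dr)} ∪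
  {e | ∃ u v z, (u, v) ∈ E ∧ v ∈ Tset E s r ∧ Dominates E s r u ∧ u ∉ Tset E s r ∧
      MarkedChildOfBoundary E s r z ∧ Dominates E s z u ∧ e = (z, v)} ∪
  {e | ∃ u v z, (u, v) ∈ E ∧ Dominates E s r u ∧ u ∉ Tset E s r ∧ ¬ Dominates E s r v ∧
      MarkedChildOfBoundary E s r z ∧ Dominates E s z u ∧ e = (z, dr)}

/-!
Contract `G` onto the vertices of `G_r`: a vertex of `T(r)` is kept, a vertex dominated by a marked
child `z` of a boundary vertex goes to `z`, and a vertex not dominated by `r` goes to `d(r)`. Every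
edge of `G` is then either collapsed to a point or sent to an edge of `G_r`: an edge can enter the
set of vertices dominated by a marked vertex `z` only at `z` itself, and only from `d(z)`. Hence
paths of `G` are contracted to paths of `G_r`, and the vertices of `G_r` are fixed.

That every vertex dominated by `r` but outside `T(r)` lies below some such `z` is seen by induction
along a path from `s`.
-/

section Paths

variable {E : Set (V × V)} {u v w x : V} {p : List V}

theorem isPathFrom_singleton (E : Set (V × V)) (u : V) : IsPathFrom E u u [u] :=
  ⟨rfl, rfl, List.isChain_singleton u⟩

theorem IsPathFrom.concat (hp : IsPathFrom E u v p) (e : (v, w) ∈ E) :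
    IsPathFrom E u w (p ++ [w]) := by
  obtain ⟨hhead, hlast, hchain⟩ := hp
  refine ⟨by simp [hhead], by simp, List.IsChain.append hchain (List.isChain_singleton w) ?_⟩
  simpa [hlast] using e

theorem IsPathFrom.exists_prefix (hp : IsPathFrom E u w p) (hx : x ∈ p) :
    ∃ q, q <+: p ∧ IsPathFrom E u x q := by
  obtain ⟨hhead, -, hchain⟩ := hp
  obtain ⟨l₁, l₂, rfl⟩ := List.append_of_mem hx
  have hprefix : l₁ ++ [x] <+: l₁ ++ x :: l₂ := ⟨l₂, by simp⟩
  exact ⟨l₁ ++ [x], hprefix, by cases l₁ <;> simpa using hhead, by simp,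
    List.IsChain.prefix hchain hprefix⟩

theorem reaches_iff_reflTransGen :
    Reaches E u w ↔ Relation.ReflTransGen (fun a b => (a, b) ∈ E) u w := by
  constructor
  · rintro ⟨p, hhead, hlast, hchain⟩
    have hp : p ≠ [] := by rintro rfl; simp at hhead
    obtain rfl : p.head hp = u := by simpa [List.head?_eq_some_head hp] using hhead
    obtain rfl : p.getLast hp = w := by simpa [List.getLast?_eq_some_getLast hp] using hlast
    exact List.relationReflTransGen_of_exists_isChain p hchain hp
  · intro h
    obtain ⟨l, hchain, hlast⟩ := List.exists_isChain_cons_of_relationReflTransGen h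
    exact ⟨u :: l, rfl, by rw [List.getLast?_eq_some_getLast (by simp), hlast], hchain⟩

theorem Reaches.map_of_edge_eq_or_mem {W : Type*} {F : Set (W × W)} (f : V → W)
    (hf : ∀ a b, (a, b) ∈ E → f a = f b ∨ (f a, f b) ∈ F) (h : Reaches E u w) :
    Reaches F (f u) (f w) := by
  rw [reaches_iff_reflTransGen] at h ⊢
  refine h.lift' f fun a b e => ?_
  rcases hf a b e with heq | hmem
  · rw [Function.onFun, heq]
  · exact .single hmem

end Paths

section Dominators

variable {E : Set (V × V)} {s a b c v w : V}

theorem dominates_refl (E : Set (V × V)) (s a : V) : Dominates E s a a :=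
  fun _ hp => List.mem_of_getLast? hp.2.1

theorem start_dominates (E : Set (V × V)) (s a : V) : Dominates E s s a :=
  fun _ hp => List.mem_of_head? hp.1

theorem Dominates.eq_start (h : Dominates E s a s) : a = s := by
  simpa using h _ (isPathFrom_singleton E s)

theorem Dominates.dominates_or_eq_of_edge (h : Dominates E s a w) (e : (v, w) ∈ E) :
    Dominates E s a v ∨ a = w := by
  by_cases haw : a = w
  · exact .inr haw
  · exact .inl fun p hp => by simpa [haw] using h _ (hp.concat e)

theorem Dominates.trans (hab : Dominates E s a b) (hbc : Dominates E s b c) :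
    Dominates E s a c := by
  intro p hp
  obtain ⟨q, hqp, hq⟩ := hp.exists_prefix (hbc p hp)
  exact hqp.subset (hab q hq)

theorem Dominates.antisymm (ha : Reaches E s a) (hab : Dominates E s a b)
    (hba : Dominates E s b a) : a = b := by
  suffices ∀ v, Reaches E s v → Dominates E s a v → a = b from this a ha (dominates_refl E s a)
  intro v hv hav
  rw [reaches_iff_reflTransGen] at hv
  induction hv with
  | refl =>
    obtain rfl := hav.eq_start
    exact hba.eq_start.symm
  | tail _ e ih =>
    rcases hav.dominates_or_eq_of_edge e with hav | rfl
    · exact ih hav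
    · rcases hba.dominates_or_eq_of_edge e with hbv | rfl
      · exact ih (hab.trans hbv)
      · rfl

theorem Dominates.total (hw : Reaches E s w) (ha : Dominates E s a w) (hb : Dominates E s b w) :
    Dominates E s a b ∨ Dominates E s b a := by
  rw [reaches_iff_reflTransGen] at hw
  induction hw with
  | refl =>
    obtain rfl := ha.eq_start
    exact .inl (start_dominates E a b)
  | tail _ e ih =>
    rcases ha.dominates_or_eq_of_edge e with hav | rfl
    · rcases hb.dominates_or_eq_of_edge e with hbv | rfl
      · exact ih hav hbv
      · exact .inl ha
    · exact .inr hb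

theorem ImmDomIs.unique (hs : ∀ v, Reaches E s v) (ha : ImmDomIs E s w a)
    (hb : ImmDomIs E s w b) : a = b :=
  Dominates.antisymm (hs a) (hb.2.2 a ha.1 ha.2.1) (ha.2.2 b hb.1 hb.2.1)

end Dominators

section Marked

variable {E : Set (V × V)} {s u z : V}

theorem Marked.ne_start (hz : Marked E s z) : z ≠ s := by
  rintro rfl
  obtain ⟨u, -, hbridge⟩ := hz
  simpa using hbridge _ (isPathFrom_singleton E z)

theorem getLast?_eq_of_mem_zip_tail_concat {α : Type*} {x z : α} {p : List α} (hz : z ∉ p)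
    (h : (x, z) ∈ (p ++ [z]).zip (p ++ [z]).tail) : p.getLast? = some x := by
  induction p with
  | nil => simp at h
  | cons a p ih =>
    cases p with
    | nil => simpa [eq_comm] using h
    | cons b p =>
      have hzb : z ≠ b := by rintro rfl; simp at hz
      have htail : (x, z) ∈ (b :: p ++ [z]).zip (b :: p ++ [z]).tail := by simpa [hzb] using h
      rw [List.getLast?_cons_cons]
      exact ih (fun hmem => hz (List.mem_cons_of_mem a hmem)) htail

theorem Marked.immDomIs_of_edge (hz : Marked E s z) (e : (u, z) ∈ E)
    (hzu : ¬ Dominates E s z u) : ImmDomIs E s z u := by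
  obtain ⟨x, -, hbridge⟩ := hz
  obtain ⟨p, hp, hzp⟩ : ∃ p, IsPathFrom E s u p ∧ z ∉ p := by
    simpa only [Dominates, not_forall, exists_prop] using hzu
  obtain rfl : u = x := Option.some_inj.1 <|
    hp.2.1.symm.trans (getLast?_eq_of_mem_zip_tail_concat hzp (hbridge _ (hp.concat e)))
  refine ⟨fun q hq => (List.of_mem_zip (hbridge q hq)).1, ?_, fun y hy hyz => ?_⟩
  · rintro rfl
    exact hzu (dominates_refl E s u)
  · exact (hy.dominates_or_eq_of_edge e).resolve_right hyz

end Marked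

section Decomposition

variable {E : Set (V × V)} {s r u v x z z' : V}

theorem mem_Tset_iff (hr : IsRoot E s r) :
    v ∈ Tset E s r ↔ Dominates E s r v ∧
      ∀ x, Marked E s x → Dominates E s x v → Dominates E s x r := by
  constructor
  · rintro (⟨-, h⟩ | ⟨rfl, hunmarked⟩)
    · exact h
    · exact ⟨start_dominates E r v, fun x hx hxv => absurd hxv (hunmarked x hx)⟩
  · rintro ⟨hrv, hdeepest⟩
    rcases hr with rfl | hr
    · exact .inr ⟨rfl, fun x hx hxv => hx.ne_start (hdeepest x hx hxv).eq_start⟩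
    · exact .inl ⟨hr, hrv, hdeepest⟩

theorem root_mem_Tset (hr : IsRoot E s r) : r ∈ Tset E s r :=
  (mem_Tset_iff hr).2 ⟨dominates_refl E s r, fun _ _ h => h⟩

namespace MarkedChildOfBoundary

theorem root_dominates (hr : IsRoot E s r) (hz : MarkedChildOfBoundary E s r z) :
    Dominates E s r z := by
  obtain ⟨-, x, hxT, hzx⟩ := hz
  exact ((mem_Tset_iff hr).1 hxT).1.trans hzx.1

theorem not_dominates_of_mem_Tset (hs : ∀ v, Reaches E s v) (hr : IsRoot E s r)
    (hz : MarkedChildOfBoundary E s r z) (hu : u ∈ Tset E s r) : ¬ Dominates E s z u := by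
  intro hzu
  obtain ⟨hzmarked, x, hxT, hzx⟩ := hz
  have hzr : Dominates E s z r := ((mem_Tset_iff hr).1 hu).2 z hzmarked hzu
  exact hzx.2.1 (Dominates.antisymm (hs x) hzx.1 (hzr.trans ((mem_Tset_iff hr).1 hxT).1))

theorem dominates_of_marked (hs : ∀ v, Reaches E s v) (hr : IsRoot E s r)
    (hz : MarkedChildOfBoundary E s r z) (hx : Marked E s x) (hxr : ¬ Dominates E s x r)
    (hzv : Dominates E s z v) (hxv : Dominates E s x v) : Dominates E s z x := by
  obtain ⟨-, y, hyT, hzy⟩ := hz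
  rcases Dominates.total (hs v) hzv hxv with hzx | hxz
  · exact hzx
  · obtain rfl : x = z := by
      by_contra hne
      exact hxr (((mem_Tset_iff hr).1 hyT).2 x hx (hzy.2.2 x hxz hne))
    exact dominates_refl E s x

theorem unique (hs : ∀ v, Reaches E s v) (hr : IsRoot E s r)
    (hz : MarkedChildOfBoundary E s r z) (hz' : MarkedChildOfBoundary E s r z')
    (hzv : Dominates E s z v) (hzv' : Dominates E s z' v) : z = z' :=
  have hzr := hz.not_dominates_of_mem_Tset hs hr (root_mem_Tset hr)
  have hzr' := hz'.not_dominates_of_mem_Tset hs hr (root_mem_Tset hr)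
  Dominates.antisymm (hs z) (hz.dominates_of_marked hs hr hz'.1 hzr' hzv hzv')
    (hz'.dominates_of_marked hs hr hz.1 hzr hzv' hzv)

end MarkedChildOfBoundary

theorem exists_markedChildOfBoundary_dominates (hs : ∀ v, Reaches E s v) (hr : IsRoot E s r)
    (hrv : Dominates E s r v) (hvT : v ∉ Tset E s r) :
    ∃ z, MarkedChildOfBoundary E s r z ∧ Dominates E s z v := by
  have hv := reaches_iff_reflTransGen.1 (hs v)
  induction hv with
  | refl =>
    obtain rfl := hrv.eq_start
    exact absurd (root_mem_Tset hr) hvT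
  | @tail u v _ e ih =>
    have hru : Dominates E s r u := (hrv.dominates_or_eq_of_edge e).resolve_right <| by
      rintro rfl
      exact hvT (root_mem_Tset hr)
    obtain ⟨x, hx, hxv, hxr⟩ : ∃ x, Marked E s x ∧ Dominates E s x v ∧ ¬ Dominates E s x r := by
      simpa [mem_Tset_iff hr, hrv] using hvT
    by_cases hxu : Dominates E s x u
    · have huT : u ∉ Tset E s r := fun huT => hxr (((mem_Tset_iff hr).1 huT).2 x hx hxu)
      obtain ⟨z, hz, hzu⟩ := ih hru huT
      exact ⟨z, hz, (hz.dominates_of_marked hs hr hx hxr hzu hxu).trans hxv⟩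
    · obtain rfl : x = v := (hxv.dominates_or_eq_of_edge e).resolve_left hxu
      have hux : ImmDomIs E s x u := hx.immDomIs_of_edge e hxu
      by_cases huT : u ∈ Tset E s r
      · exact ⟨x, ⟨hx, u, huT, hux⟩, dominates_refl E s x⟩
      · obtain ⟨z, hz, hzu⟩ := ih hru huT
        exact ⟨z, hz, hzu.trans hux.1⟩

end Decomposition

section Contraction

variable {E : Set (V × V)} {s r dr u v z : V}

open Classical in
/-- The contraction of `G` onto the vertices of `G_r`, with `dr` in the role of `d(r)`; it carries
paths of `G` to paths of `G_r`. The vertex chosen in the second case is unique when every vertex is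
reachable from `s`, by `MarkedChildOfBoundary.unique`. -/
noncomputable def auxContract (E : Set (V × V)) (s r dr v : V) : V :=
  if v ∈ Tset E s r then v
  else if h : ∃ z, MarkedChildOfBoundary E s r z ∧ Dominates E s z v then h.choose
  else dr

theorem auxContract_of_mem_Tset (hv : v ∈ Tset E s r) : auxContract E s r dr v = v :=
  if_pos hv

theorem auxContract_of_dominates (hs : ∀ v, Reaches E s v) (hr : IsRoot E s r)
    (hz : MarkedChildOfBoundary E s r z) (hzv : Dominates E s z v) :
    auxContract E s r dr v = z := by
  have hvT : v ∉ Tset E s r := fun hvT => hz.not_dominates_of_mem_Tset hs hr hvT hzv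
  have hex : ∃ z, MarkedChildOfBoundary E s r z ∧ Dominates E s z v := ⟨z, hz, hzv⟩
  rw [auxContract, if_neg hvT, dif_pos hex]
  exact hex.choose_spec.1.unique hs hr hz hex.choose_spec.2 hzv

theorem auxContract_of_not_dominates (hr : IsRoot E s r) (hv : ¬ Dominates E s r v) :
    auxContract E s r dr v = dr := by
  have hvT : v ∉ Tset E s r := fun hvT => hv ((mem_Tset_iff hr).1 hvT).1
  have hnex : ¬ ∃ z, MarkedChildOfBoundary E s r z ∧ Dominates E s z v :=
    fun ⟨_, hz, hzv⟩ => hv ((hz.root_dominates hr).trans hzv)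
  rw [auxContract, if_neg hvT, dif_neg hnex]

theorem auxContract_of_mem_auxVerts (hs : ∀ v, Reaches E s v) (hr : IsRoot E s r)
    (hdr : Marked E s r → ImmDomIs E s r dr) (hv : v ∈ auxVerts E s r dr) :
    auxContract E s r dr v = v := by
  rcases hv with (hvT | hz) | ⟨hrs, rfl⟩
  · exact auxContract_of_mem_Tset hvT
  · exact auxContract_of_dominates hs hr hz (dominates_refl E s v)
  · have hvr := hdr (hr.resolve_left hrs)
    exact auxContract_of_not_dominates hr fun hrv =>
      hvr.2.1 (Dominates.antisymm (hs v) hvr.1 hrv)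

theorem auxContract_mem_auxEdges_of_mem_Tset (hs : ∀ v, Reaches E s v) (hr : IsRoot E s r)
    (e : (u, v) ∈ E) (hv : v ∈ Tset E s r) :
    (auxContract E s r dr u, v) ∈ auxEdges E s r dr := by
  simp only [auxEdges, Set.mem_union]
  by_cases hru : Dominates E s r u
  · by_cases huT : u ∈ Tset E s r
    · rw [auxContract_of_mem_Tset huT]
      exact .inl <| .inl <| .inl <| .inl <| .inl ⟨e, huT, hv⟩
    · obtain ⟨z, hz, hzu⟩ := exists_markedChildOfBoundary_dominates hs hr hru huT
      rw [auxContract_of_dominates hs hr hz hzu]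
      exact .inl <| .inr ⟨u, v, z, e, hv, hru, huT, hz, hzu, rfl⟩
  · have hrs : r ≠ s := by
      rintro rfl
      exact hru (start_dominates E r u)
    obtain rfl : r = v :=
      (((mem_Tset_iff hr).1 hv).1.dominates_or_eq_of_edge e).resolve_left hru
    rw [auxContract_of_not_dominates hr hru]
    exact .inl <| .inl <| .inl <| .inr ⟨hrs, rfl⟩

theorem auxContract_eq_or_mem_auxEdges_of_dominates (hs : ∀ v, Reaches E s v) (hr : IsRoot E s r)
    (e : (u, v) ∈ E) (hz : MarkedChildOfBoundary E s r z) (hzv : Dominates E s z v) :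
    auxContract E s r dr u = z ∨ (auxContract E s r dr u, z) ∈ auxEdges E s r dr := by
  by_cases hzu : Dominates E s z u
  · exact .inl (auxContract_of_dominates hs hr hz hzu)
  · obtain rfl : z = v := (hzv.dominates_or_eq_of_edge e).resolve_left hzu
    have hu : ImmDomIs E s z u := hz.1.immDomIs_of_edge e hzu
    obtain ⟨hzmarked, x, hxT, hx⟩ := hz
    obtain rfl : u = x := hu.unique hs hx
    rw [auxContract_of_mem_Tset hxT]
    simp only [auxEdges, Set.mem_union]
    exact .inr <| .inl <| .inl <| .inl <| .inl <| .inr ⟨hxT, hzmarked, hu⟩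

theorem auxContract_eq_or_mem_auxEdges_of_not_dominates (hs : ∀ v, Reaches E s v)
    (hr : IsRoot E s r) (e : (u, v) ∈ E) (hv : ¬ Dominates E s r v) :
    auxContract E s r dr u = dr ∨ (auxContract E s r dr u, dr) ∈ auxEdges E s r dr := by
  by_cases hru : Dominates E s r u
  · right
    simp only [auxEdges, Set.mem_union]
    by_cases huT : u ∈ Tset E s r
    · rw [auxContract_of_mem_Tset huT]
      exact .inl <| .inl <| .inr ⟨u, v, e, huT, hv, rfl⟩
    · obtain ⟨z, hz, hzu⟩ := exists_markedChildOfBoundary_dominates hs hr hru huT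
      rw [auxContract_of_dominates hs hr hz hzu]
      exact .inr ⟨u, v, z, e, hru, huT, hv, hz, hzu, rfl⟩
  · exact .inl (auxContract_of_not_dominates hr hru)

theorem auxContract_eq_or_mem_auxEdges (hs : ∀ v, Reaches E s v) (hr : IsRoot E s r)
    (e : (u, v) ∈ E) :
    auxContract E s r dr u = auxContract E s r dr v ∨
      (auxContract E s r dr u, auxContract E s r dr v) ∈ auxEdges E s r dr := by
  by_cases hrv : Dominates E s r v
  · by_cases hvT : v ∈ Tset E s r
    · rw [auxContract_of_mem_Tset hvT]
      exact .inr (auxContract_mem_auxEdges_of_mem_Tset hs hr e hvT)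
    · obtain ⟨z, hz, hzv⟩ := exists_markedChildOfBoundary_dominates hs hr hrv hvT
      rw [auxContract_of_dominates hs hr hz hzv]
      exact auxContract_eq_or_mem_auxEdges_of_dominates hs hr e hz hzv
  · rw [auxContract_of_not_dominates hr hrv]
    exact auxContract_eq_or_mem_auxEdges_of_not_dominates hs hr e hrv

end Contraction

theorem aux_graph_strongly_connected_general {E : Set (V × V)} {s r dr u w : V}
    (hs : ∀ v, Reaches E s v) (hr : IsRoot E s r) (hdr : Marked E s r → ImmDomIs E s r dr)
    (hu : u ∈ auxVerts E s r dr) (hw : w ∈ auxVerts E s r dr) (huw : Reaches E u w) :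
    Reaches (auxEdges E s r dr) u w := by
  rw [← auxContract_of_mem_auxVerts hs hr hdr hu, ← auxContract_of_mem_auxVerts hs hr hdr hw]
  exact huw.map_of_edge_eq_or_mem _ fun _ _ e => auxContract_eq_or_mem_auxEdges hs hr e

/-- Every auxiliary graph `G_r` of a strongly connected digraph is strongly
connected. -/
theorem aux_graph_strongly_connected
    {V : Type*} [Fintype V] (E : Set (V × V)) (s : V)
    (hsc : StronglyConnected E) (r dr : V)
    (hr : IsRoot E s r) (hdr : Marked E s r → ImmDomIs E s r dr) :
    ∀ u ∈ auxVerts E s r dr, ∀ w ∈ auxVerts E s r dr,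
      Reaches (auxEdges E s r dr) u w :=
  fun _ hu _ hw => aux_graph_strongly_connected_general (hsc s) hr hdr hu hw (hsc _ _)
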